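/- Let (S, σ, τ) be a frame for R and assume that every finitely generated projective R-module is isomorphic to Q ⊗_{S₀} R for some finitely generated projective S₀-module Q. Then every graded S-module M that is finitely generated and projective as an S-module is standard projective: there exists a graded finitely generated projective S₀-module L = ⊕_{i∈ℤ} Lᵢ (each Lᵢ a finitely generated projective S₀-module, almost all zero) and an isomorphism of graded S-modules M ≅ L ⊗_{S₀} S, where L ⊗_{S₀} S carries the grading with (L ⊗_{S₀} S)ₙ = ⊕ᵢ Lᵢ ⊗_{S₀} S_{n−i}. -/

import Mathlib

/-- A (higher) frame. -/
structure Frame (p : ℕ) (S : Type) [CommRing S] where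
  grade : ℤ → AddSubgroup S
  one_mem : (1 : S) ∈ grade 0
  mul_mem : ∀ {m n : ℤ} {a b : S}, a ∈ grade m → b ∈ grade n → a * b ∈ grade (m + n)
  isInternal : DirectSum.IsInternal grade
  σ : S →+* S
  τ : S →+* S
  σ_mem : ∀ s, σ s ∈ grade 0
  τ_mem : ∀ s, τ s ∈ grade 0
  τ_id : ∀ s ∈ grade 0, τ s = s
  τ_bij : ∀ n : ℕ, 1 ≤ n → Set.BijOn τ (grade (-(n : ℤ))) (grade 0)
  t : S
  t_mem : t ∈ grade (-1)
  τ_t : τ t = 1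
  σ_frob : ∀ s ∈ grade 0, ∃ c ∈ grade 0, σ s = s ^ p + (p : S) * c
  σ_t : σ t = (p : S)
  p_jac : ∀ x ∈ grade 0, ∃ y ∈ grade 0, (1 - (p : S) * x) * y = 1

variable {p : ℕ} {S : Type} [CommRing S]

/-- The degree zero subring S₀ of a frame. -/
def Frame.S0 (F : Frame p S) : Subring S where
  carrier := F.grade 0
  mul_mem' {a b} ha hb := by simpa using F.mul_mem ha hb
  one_mem' := F.one_mem
  add_mem' {a b} ha hb := add_mem ha hb
  zero_mem' := zero_mem _
  neg_mem' {a} ha := neg_mem ha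

/-- The ideal tS₁ ⊆ S₀. -/
def Frame.tS1 (F : Frame p S) : Ideal F.S0 where
  carrier := {a | ∃ x ∈ F.grade 1, (a : S) = F.t * x}
  add_mem' := by
    rintro a b ⟨x, hx, hax⟩ ⟨y, hy, hby⟩
    exact ⟨x + y, add_mem hx hy, by push_cast [hax, hby]; ring⟩
  zero_mem' := ⟨0, zero_mem _, by simp⟩
  smul_mem' := by
    rintro c a ⟨x, hx, hax⟩
    refine ⟨(c : S) * x, by simpa using F.mul_mem c.2 hx, ?_⟩
    show ((c * a : F.S0) : S) = _
    push_cast [hax]; ring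

/-- The ring R = S₀/tS₁ of a frame. -/
abbrev Frame.R (F : Frame p S) : Type := F.S0 ⧸ F.tS1

/-- The kernel of ρ : S → R, the graded ideal with K₀ = tS₁ and Kₙ = Sₙ for n ≠ 0. -/
def Frame.kerRho (F : Frame p S) : Ideal S :=
  Ideal.span ({s : S | ∃ x ∈ F.grade 1, s = F.t * x} ∪ ⋃ (n : ℤ) (_ : n ≠ 0), (F.grade n : Set S))


set_option synthInstance.maxHeartbeats 1000000

open scoped TensorProduct

/-- A witness that a finitely generated projective `R`-module `P` (for `R = S₀/tS₁`) lifts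
to a finitely generated projective `S₀`-module `Q`, i.e. `P ≅ Q ⊗_{S₀} R`. -/
structure Frame.LiftWitness (F : Frame p S) (P : Type) [AddCommGroup P] [Module F.R P] where
  Q : Type
  [instAddCommGroup : AddCommGroup Q]
  [instModule : Module F.S0 Q]
  finite : Module.Finite F.S0 Q
  projective : Module.Projective F.S0 Q
  equiv : (TensorProduct F.S0 F.R Q) ≃ₗ[F.R] P

attribute [instance] Frame.LiftWitness.instAddCommGroup Frame.LiftWitness.instModule

/-- A witness that a graded `S`-module `M` (with grading `ℳ`) is standard projective:
a graded finitely generated projective `S₀`-module `L = ⊕ᵢ Lᵢ` together with an isomorphism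
of graded `S`-modules `M ≅ L ⊗_{S₀} S`, where `L ⊗_{S₀} S` carries the grading with
`(L ⊗_{S₀} S)ₙ = ⊕ᵢ Lᵢ ⊗_{S₀} S_{n−i}`. -/
structure Frame.StandardProjectiveWitness (F : Frame p S)
    (M : Type) [AddCommGroup M] [Module S M] (ℳ : ℤ → AddSubgroup M) where
  L : Type
  [instAddCommGroup : AddCommGroup L]
  [instModule : Module F.S0 L]
  /-- the grading `L = ⊕ᵢ Lᵢ` by `S₀`-submodules -/
  Λ : ℤ → Submodule F.S0 L
  internal : DirectSum.IsInternal Λ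
  /-- almost all graded pieces vanish -/
  finiteSupport : {i : ℤ | Λ i ≠ ⊥}.Finite
  finite : Module.Finite F.S0 L
  projective : Module.Projective F.S0 L
  /-- the isomorphism of `S`-modules `L ⊗_{S₀} S ≅ M` -/
  equiv : (TensorProduct F.S0 S L) ≃ₗ[S] M
  /-- `equiv` is an isomorphism of graded modules, where `(L ⊗_{S₀} S)ₙ` is the subgroup
  generated by the pure tensors `s ⊗ y` with `s ∈ S_{n−i}`, `y ∈ Lᵢ` -/
  graded : ∀ (n : ℤ) (x : M), x ∈ ℳ n ↔
      equiv.symm x ∈ AddSubgroup.closure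
        {w : TensorProduct F.S0 S L |
          ∃ (i : ℤ) (s : S) (y : L), s ∈ F.grade (n - i) ∧ y ∈ Λ i ∧ w = s ⊗ₜ[F.S0] y}

namespace FrameAux

section grproj
variable {G : Type} [AddCommGroup G] (𝒢 : ℤ → AddSubgroup G) (h : DirectSum.IsInternal 𝒢)

/-- The projection onto the `n`-th graded piece. -/
noncomputable def gproj (n : ℤ) : G →+ G :=
  (𝒢 n).subtype.comp ((DFinsupp.evalAddMonoidHom n).comp
    (AddEquiv.ofBijective (DirectSum.coeAddMonoidHom 𝒢) h).symm.toAddMonoidHom)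

lemma gproj_mem (n : ℤ) (x : G) : gproj 𝒢 h n x ∈ 𝒢 n :=
  SetLike.coe_mem _

lemma symm_of {m : ℤ} {x : G} (hx : x ∈ 𝒢 m) :
    (AddEquiv.ofBijective (DirectSum.coeAddMonoidHom 𝒢) h).symm x
      = DirectSum.of (fun i => 𝒢 i) m ⟨x, hx⟩ := by
  rw [AddEquiv.symm_apply_eq]
  exact (DirectSum.coeAddMonoidHom_of 𝒢 m ⟨x, hx⟩).symm

lemma gproj_same {n : ℤ} {x : G} (hx : x ∈ 𝒢 n) : gproj 𝒢 h n x = x := by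
  have := symm_of 𝒢 h hx
  simp only [gproj, AddMonoidHom.comp_apply, AddEquiv.toAddMonoidHom_eq_coe,
    AddMonoidHom.coe_coe, this]
  have h2 := DirectSum.of_eq_same (β := fun i => 𝒢 i) n ⟨x, hx⟩
  exact congrArg Subtype.val h2

lemma gproj_ne {m n : ℤ} (hmn : m ≠ n) {x : G} (hx : x ∈ 𝒢 m) : gproj 𝒢 h n x = 0 := by
  have := symm_of 𝒢 h hx
  simp only [gproj, AddMonoidHom.comp_apply, AddEquiv.toAddMonoidHom_eq_coe,
    AddMonoidHom.coe_coe, this]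
  have h2 := DirectSum.of_eq_of_ne (β := fun i => 𝒢 i) m n ⟨x, hx⟩ hmn.symm
  exact congrArg Subtype.val h2

@[elab_as_elim]
lemma gr_induction {G : Type} [AddCommGroup G] (𝒢 : ℤ → AddSubgroup G)
    (h : DirectSum.IsInternal 𝒢) {P : G → Prop} (h0 : P 0) (h1 : ∀ n, ∀ x ∈ 𝒢 n, P x)
    (h2 : ∀ x y, P x → P y → P (x + y)) (x : G) : P x := by
  obtain ⟨d, rfl⟩ := h.2 x
  induction d using DirectSum.induction_on with
  | zero => simpa using h0
  | of i x => simpa using h1 i x x.2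
  | add x y hx hy => rw [map_add]; exact h2 _ _ hx hy

end grproj

/-- The abstract situation: `A` is the degree zero part of `B`, `R` the quotient of both. -/
structure Setup (A B R : Type) [CommRing A] [CommRing B] [CommRing R] [Algebra A B]
    [Algebra B R] [Algebra A R] [IsScalarTower A B R] where
  grade : ℤ → AddSubgroup B
  mul_mem : ∀ {m n : ℤ} {a b : B}, a ∈ grade m → b ∈ grade n → a * b ∈ grade (m + n)
  internal : DirectSum.IsInternal grade
  algebraMap_mem : ∀ a : A, algebraMap A B a ∈ grade 0
  kill : ∀ {n : ℤ} {s : B}, n ≠ 0 → s ∈ grade n → algebraMap B R s = 0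
  surj : Function.Surjective (algebraMap A R)
  unit : ∀ s ∈ grade 0, algebraMap B R s = 1 → IsUnit s

variable {A B R : Type} [CommRing A] [CommRing B] [CommRing R] [Algebra A B]
    [Algebra B R] [Algebra A R] [IsScalarTower A B R] (T : Setup A B R)

section modproj
variable {M : Type} [AddCommGroup M] [Module B M] (ℳ : ℤ → AddSubgroup M)

lemma gproj_hsmul
    (hsmul : ∀ {m n : ℤ} {a : B} {x : M}, a ∈ T.grade m → x ∈ ℳ n → a • x ∈ ℳ (m + n))
    (hint : DirectSum.IsInternal ℳ)
    {k : ℤ} {s : B} (hs : s ∈ T.grade k) (n : ℤ) (x : M) :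
    gproj ℳ hint n (s • x) = s • gproj ℳ hint (n - k) x := by
  refine gr_induction ℳ hint ?_ ?_ ?_ x
  · rw [smul_zero, map_zero, map_zero, smul_zero]
  · intro m x hx
    by_cases hm : m = n - k
    · subst hm
      rw [gproj_same ℳ hint hx, gproj_same ℳ hint]
      simpa using hsmul hs hx
    · rw [gproj_ne ℳ hint hm hx, gproj_ne ℳ hint (m := k + m) (by omega) (hsmul hs hx), smul_zero]
  · intro x y hx hy
    rw [smul_add, map_add, map_add, smul_add, hx, hy]

lemma gproj_smulh
    (hsmul : ∀ {m n : ℤ} {a : B} {x : M}, a ∈ T.grade m → x ∈ ℳ n → a • x ∈ ℳ (m + n))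
    (hint : DirectSum.IsInternal ℳ)
    {d : ℤ} {x : M} (hx : x ∈ ℳ d) (n : ℤ) (s : B) :
    gproj ℳ hint n (s • x) = gproj T.grade T.internal (n - d) s • x := by
  refine gr_induction T.grade T.internal ?_ ?_ ?_ s
  · rw [zero_smul, map_zero, map_zero, zero_smul]
  · intro m s hs
    by_cases hm : m = n - d
    · subst hm
      rw [gproj_same _ T.internal hs, gproj_same ℳ hint]
      simpa using hsmul hs hx
    · rw [gproj_ne _ T.internal hm hs, gproj_ne ℳ hint (m := m + d) (by omega) (hsmul hs hx),
        zero_smul]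
  · intro x y hx hy
    rw [add_smul, map_add, map_add, add_smul, hx, hy]
end modproj

/-- Projection of `B` onto the `n`-th graded piece, as an `A`-linear map. -/
noncomputable def Setup.pr (n : ℤ) : B →ₗ[A] B where
  toFun := gproj T.grade T.internal n
  map_add' := map_add _
  map_smul' a s := by
    have := gproj_hsmul T T.grade T.mul_mem T.internal (T.algebraMap_mem a) n s
    simpa [Algebra.smul_def] using this

lemma Setup.pr_mem (n : ℤ) (s : B) : T.pr n s ∈ T.grade n := gproj_mem _ _ _ _

lemma Setup.map_pr {n : ℤ} {s : B} (hs : algebraMap B R s = 0) :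
    algebraMap B R (T.pr n s) = 0 := by
  by_cases hn : n = 0
  · subst hn
    rw [← hs]
    clear hs
    refine gr_induction T.grade T.internal ?_ ?_ ?_ s
    · rw [map_zero, map_zero]
    · intro m s hs
      by_cases hm : m = 0
      · subst hm
        exact congrArg _ (gproj_same _ T.internal hs)
      · rw [T.kill hm hs]
        exact (congrArg _ (gproj_ne _ T.internal hm hs)).trans (map_zero _)
    · intro x y hx hy
      rw [map_add, map_add, map_add, hx, hy]
  · exact T.kill hn (T.pr_mem _ _)

lemma Setup.one_mem : (1 : B) ∈ T.grade 0 := by simpa using T.algebraMap_mem 1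

lemma Setup.pr_pr (n : ℤ) (s : B) : T.pr n (T.pr n s) = T.pr n s :=
  gproj_same _ T.internal (T.pr_mem _ _)

lemma Setup.surjBR {A B R : Type} [CommRing A] [CommRing B] [CommRing R] [Algebra A B]
    [Algebra B R] [Algebra A R] [IsScalarTower A B R] (T : Setup A B R) : Function.Surjective (algebraMap B R) := by
  intro r
  obtain ⟨a, rfl⟩ := T.surj r
  exact ⟨algebraMap A B a, (IsScalarTower.algebraMap_apply A B R a).symm⟩

lemma Setup.prod_mem {J : Type} (s : Finset J) (e : J → ℤ) (f : J → B)
    (hf : ∀ j, f j ∈ T.grade (e j)) : ∏ j ∈ s, f j ∈ T.grade (∑ j ∈ s, e j) := by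
  classical
  induction s using Finset.induction_on with
  | empty => simpa using T.one_mem
  | insert a s ha ih => rw [Finset.prod_insert ha, Finset.sum_insert ha]; exact T.mul_mem (hf a) ih

open scoped TensorProduct

lemma exists_coeff {A B R : Type} [CommRing A] [CommRing B] [CommRing R] [Algebra A B]
    [Algebra B R] [Algebra A R] [IsScalarTower A B R] (T : Setup A B R) {N : Type} [AddCommGroup N] [Module B N] {J : Type} [Fintype J]
    (m : J → N) (hspan : Submodule.span B (Set.range m) = ⊤) (x : N)
    (hx : (1 : R) ⊗ₜ[B] x = 0) :
    ∃ k : J → B, (∀ j, algebraMap B R (k j) = 0) ∧ x = ∑ j, k j • m j := by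
  let I : Ideal B := RingHom.ker (algebraMap B R)
  let e : (B ⧸ I) ≃ₗ[B] R :=
    (Algebra.linearMap B R).quotKerEquivOfSurjective T.surjBR
  have he : e 1 = 1 := map_one (algebraMap B R)
  have h1 : (1 : B ⧸ I) ⊗ₜ[B] x = 0 := by
    apply (TensorProduct.congr e (LinearEquiv.refl B N)).injective
    simpa [he] using hx
  have h2 : x ∈ I • (⊤ : Submodule B N) := by
    rw [← LinearMap.ker_tensorProductMk]
    simpa using h1
  rw [← hspan, Submodule.mem_ideal_smul_span_iff_exists_sum] at h2
  obtain ⟨a, ha, hs⟩ := h2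
  refine ⟨a, fun j => ha j, ?_⟩
  rw [← hs, Finsupp.sum_fintype _ _ (by simp)]

lemma nak {N : Type} [AddCommGroup N] [Module B N] {J : Type} [Fintype J]
    (m : J → N) (d : J → ℤ) (hspan : Submodule.span B (Set.range m) = ⊤)
    (π : ℤ → N →+ N) (hπ : ∀ n s j, π n (s • m j) = T.pr (n - d j) s • m j)
    (h : N →ₗ[B] N) (h1 : ∀ j, π (d j) (h (m j) - m j) = h (m j) - m j)
    (h2 : ∀ j, (1 : R) ⊗ₜ[B] (h (m j) - m j) = 0) : Function.Bijective h := by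
  classical
  have hfin : Module.Finite B N := ⟨⟨Finset.univ.image m, by simpa using hspan⟩⟩
  refine OrzechProperty.bijective_of_surjective_endomorphism h ?_
  choose k hk hkx using fun j => exists_coeff T m hspan _ (h2 j)
  let k' : Matrix J J B := fun i j => T.pr (d i - d j) (k i j)
  have hk' : ∀ i, h (m i) - m i = ∑ j, k' i j • m j := by
    intro i
    rw [← h1 i]
    conv_lhs => rw [hkx i]
    simp [hπ, k']
  let C : Matrix J J B := 1 + k'
  have hC : ∀ i, h (m i) = ∑ j, C i j • m j := by
    intro i
    rw [← sub_add_cancel (h (m i)) (m i), hk' i]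
    simp [C, add_smul, Finset.sum_add_distrib, Matrix.one_apply, add_comm]
  have hCm : ∀ i j, C i j ∈ T.grade (d i - d j) := by
    intro i j
    refine add_mem ?_ (T.pr_mem _ _)
    by_cases hij : i = j
    · subst hij; simpa using T.one_mem
    · simp [hij]
  have hdet0 : C.det ∈ T.grade 0 := by
    rw [Matrix.det_apply]
    refine sum_mem fun σ _ => ?_
    rw [Units.smul_def]
    refine zsmul_mem ?_ _
    have := T.prod_mem Finset.univ (fun i => d (σ i) - d i) (fun i => C (σ i) i) fun i => hCm _ _
    rwa [Finset.sum_sub_distrib, Equiv.sum_comp σ d, sub_self] at this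
  have hdet1 : algebraMap B R C.det = 1 := by
    rw [RingHom.map_det]
    rw [show (algebraMap B R).mapMatrix C = 1 from ?_, Matrix.det_one]
    ext i j
    have : algebraMap B R (k' i j) = 0 := T.map_pr (hk i j)
    by_cases hij : i = j
    · subst hij; simp [C, this]
    · simp [C, this, hij]
  have hu := T.unit _ hdet0 hdet1
  rw [← LinearMap.range_eq_top, eq_top_iff, ← hspan, Submodule.span_le]
  rintro _ ⟨l, rfl⟩
  have key : C.det • m l ∈ LinearMap.range h := by
    have : C.det • m l = ∑ i, C.adjugate l i • h (m i) := by
      simp_rw [hC, Finset.smul_sum, smul_smul]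
      rw [Finset.sum_comm]
      simp_rw [← Finset.sum_smul, ← Matrix.mul_apply, Matrix.adjugate_mul]
      simp [Matrix.one_apply]
    rw [this]
    exact sum_mem fun i _ => Submodule.smul_mem _ _ ⟨_, rfl⟩
  obtain ⟨u, hu⟩ := hu
  rw [← hu] at key
  have := Submodule.smul_mem _ (↑u⁻¹ : B) key
  simpa [smul_smul] using this

section barproj
variable {M : Type} [AddCommGroup M] [Module B M] (ℳ : ℤ → AddSubgroup M)
    (hsmul : ∀ {m n : ℤ} {a : B} {x : M}, a ∈ T.grade m → x ∈ ℳ n → a • x ∈ ℳ (m + n))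
    (hint : DirectSum.IsInternal ℳ)

/-- `m ↦ 1 ⊗ mᵢ` is linear. -/
noncomputable def barL (i : ℤ) : M →ₗ[B] R ⊗[B] M where
  toFun m := 1 ⊗ₜ gproj ℳ hint i m
  map_add' x y := by rw [map_add, TensorProduct.tmul_add]
  map_smul' s x := by
    simp only [RingHom.id_apply]
    refine gr_induction T.grade T.internal ?_ ?_ ?_ s
    · rw [zero_smul, zero_smul, map_zero, TensorProduct.tmul_zero]
    · intro k s hs
      rw [gproj_hsmul T ℳ hsmul hint hs]
      by_cases hk : k = 0
      · subst hk
        rw [sub_zero, TensorProduct.tmul_smul]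
      · rw [← TensorProduct.smul_tmul, TensorProduct.smul_tmul', Algebra.smul_def, T.kill hk hs,
          zero_mul, TensorProduct.zero_tmul, TensorProduct.zero_tmul]
    · intro a b ha hb
      rw [add_smul, map_add, TensorProduct.tmul_add, ha, hb, add_smul]

/-- The projection of `R ⊗ M` on its `i`-th graded piece. -/
noncomputable def barP (i : ℤ) : R ⊗[B] M →ₗ[R] R ⊗[B] M :=
  (barL T ℳ hsmul hint i).liftBaseChange R

lemma barP_one (i : ℤ) (m : M) :
    barP T ℳ hsmul hint i (1 ⊗ₜ m) = 1 ⊗ₜ gproj ℳ hint i m := by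
  rw [barP, LinearMap.liftBaseChange_one_tmul]; rfl

end barproj

lemma Setup.mk_surj {A B R : Type} [CommRing A] [CommRing B] [CommRing R] [Algebra A B]
    [Algebra B R] [Algebra A R] [IsScalarTower A B R] (T : Setup A B R)
    (N : Type) [AddCommGroup N] [Module B N] (z : R ⊗[B] N) :
    ∃ x : N, (1 : R) ⊗ₜ[B] x = z :=
  TensorProduct.mk_surjective B N R T.surjBR z

section core
set_option linter.unusedSectionVars false
variable {M : Type} [AddCommGroup M] [Module B M] [Module A M] [IsScalarTower A B M]
    {ι : Type} [Fintype ι] [DecidableEq ι] (d : ι → ℤ) (Q : ι → Type)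
    [∀ i, AddCommGroup (Q i)] [∀ i, Module A (Q i)] (φ : ∀ i, Q i →ₗ[A] M)

/-- The map `L → M`. -/
noncomputable def fL : (∀ i, Q i) →ₗ[A] M := ∑ i, (φ i) ∘ₗ LinearMap.proj i

lemma fL_apply (y : ∀ i, Q i) : fL Q φ y = ∑ i, φ i (y i) := by
  simp [fL]

lemma fL_single (i : ι) (q : Q i) : fL Q φ (Pi.single i q) = φ i q := by
  rw [fL_apply, Finset.sum_eq_single i]
  · simp
  · intro j _ hj
    simp [Pi.single_eq_of_ne hj]
  · simp

/-- The map `B ⊗ L → M`. -/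
noncomputable def fP : B ⊗[A] (∀ i, Q i) →ₗ[B] M := (fL Q φ).liftBaseChange B

lemma fP_tmul (s : B) (y : ∀ i, Q i) : fP Q φ (s ⊗ₜ[A] y) = s • fL Q φ y := by
  simp [fP]

/-- The projection on the `n`-th graded piece of `B ⊗ L`. -/
noncomputable def prP (n : ℤ) : B ⊗[A] (∀ i, Q i) →ₗ[A] B ⊗[A] (∀ i, Q i) :=
  ∑ i, TensorProduct.map (T.pr (n - d i)) (LinearMap.single A Q i ∘ₗ LinearMap.proj i)

lemma prP_tmul (n : ℤ) (s : B) (y : ∀ i, Q i) :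
    prP T d Q n (s ⊗ₜ[A] y) = ∑ i, T.pr (n - d i) s ⊗ₜ[A] Pi.single i (y i) := by
  simp [prP]

lemma prP_single (n : ℤ) (s : B) (i : ι) (q : Q i) :
    prP T d Q n (s ⊗ₜ[A] Pi.single i q) = T.pr (n - d i) s ⊗ₜ[A] Pi.single i q := by
  rw [prP_tmul, Finset.sum_eq_single i]
  · simp
  · intro j _ hj
    simp [Pi.single_eq_of_ne hj]
  · simp

lemma prP_idem (n : ℤ) (w : B ⊗[A] (∀ i, Q i)) :
    prP T d Q n (prP T d Q n w) = prP T d Q n w := by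
  induction w using TensorProduct.induction_on with
  | zero => simp
  | tmul s y =>
    rw [prP_tmul, map_sum]
    refine Finset.sum_congr rfl fun i _ => ?_
    rw [prP_single, T.pr_pr]
  | add x y hx hy => rw [map_add, map_add, hx, hy]

lemma prP_hsmul {k : ℤ} {s : B} (hs : s ∈ T.grade k) (n : ℤ) (w : B ⊗[A] (∀ i, Q i)) :
    prP T d Q (k + n) (s • w) = s • prP T d Q n w := by
  induction w using TensorProduct.induction_on with
  | zero => simp
  | tmul s' y =>
    rw [TensorProduct.smul_tmul', prP_tmul, prP_tmul, Finset.smul_sum]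
    refine Finset.sum_congr rfl fun i _ => ?_
    rw [TensorProduct.smul_tmul']
    congr 1
    have := gproj_hsmul T T.grade T.mul_mem T.internal hs (k + n - d i) s'
    rw [show k + n - d i - k = n - d i by ring] at this
    exact this
  | add x y hx hy => rw [smul_add, map_add, map_add, hx, hy, smul_add]

lemma fP_prP (ℳ : ℤ → AddSubgroup M)
    (hsmul : ∀ {m n : ℤ} {a : B} {x : M}, a ∈ T.grade m → x ∈ ℳ n → a • x ∈ ℳ (m + n))
    (hint : DirectSum.IsInternal ℳ) (hφ : ∀ i q, φ i q ∈ ℳ (d i))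
    (n : ℤ) (w : B ⊗[A] (∀ i, Q i)) :
    fP Q φ (prP T d Q n w) = gproj ℳ hint n (fP Q φ w) := by
  induction w using TensorProduct.induction_on with
  | zero => rw [map_zero, map_zero, map_zero]
  | tmul s y =>
    rw [prP_tmul, map_sum, fP_tmul, fL_apply, Finset.smul_sum, map_sum]
    refine Finset.sum_congr rfl fun i _ => ?_
    rw [fP_tmul, fL_single, gproj_smulh T ℳ hsmul hint (hφ i _)]
    rfl
  | add x y hx hy => rw [map_add, map_add, map_add, map_add, hx, hy]

theorem core (ℳ : ℤ → AddSubgroup M)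
    (hsmul : ∀ {m n : ℤ} {a : B} {x : M}, a ∈ T.grade m → x ∈ ℳ n → a • x ∈ ℳ (m + n))
    (hint : DirectSum.IsInternal ℳ) (hφ : ∀ i q, φ i q ∈ ℳ (d i))
    [Module.Projective B M] [∀ i, Module.Finite A (Q i)]
    {J : Type} [Fintype J] (m : J → M) (e : J → ℤ) (hm : ∀ j, m j ∈ ℳ (e j))
    (hspan : Submodule.span B (Set.range m) = ⊤)
    (γ : R ⊗[B] M →ₗ[R] R ⊗[B] (B ⊗[A] (∀ i, Q i)))
    (hγ1 : ∀ x : M, (fP Q φ).baseChange R (γ (1 ⊗ₜ x)) = 1 ⊗ₜ x)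
    (hγ2 : ∀ w : B ⊗[A] (∀ i, Q i), γ (1 ⊗ₜ fP Q φ w) = 1 ⊗ₜ w) : Function.Bijective (fP (B := B) Q φ) := by
  classical
  obtain ⟨g, hg⟩ := Module.projective_lifting_property
    (TensorProduct.mk B R (B ⊗[A] (∀ i, Q i)) 1)
    ((γ.restrictScalars B) ∘ₗ TensorProduct.mk B R M 1)
    (T.mk_surj _)
  have hg' : ∀ x, (1 : R) ⊗ₜ[B] g x = γ (1 ⊗ₜ x) := fun x => LinearMap.congr_fun hg x
  let ga : M →+ B ⊗[A] (∀ i, Q i) :=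
    (DirectSum.toAddMonoid fun n => ((prP T d Q n).toAddMonoidHom.comp g.toAddMonoidHom).comp
      (ℳ n).subtype).comp
      (AddEquiv.ofBijective (DirectSum.coeAddMonoidHom ℳ) hint).symm.toAddMonoidHom
  have hga : ∀ n, ∀ x ∈ ℳ n, ga x = prP T d Q n (g x) := by
    intro n x hx
    have h1 := symm_of ℳ hint hx
    simp only [ga, AddMonoidHom.comp_apply, AddEquiv.toAddMonoidHom_eq_coe,
      AddMonoidHom.coe_coe, h1]
    exact DirectSum.toAddMonoid_of _ _ _
  let g0 : M →ₗ[B] B ⊗[A] (∀ i, Q i) :=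
    { ga with
      map_smul' := by
        intro s x
        change ga (s • x) = s • ga x
        refine gr_induction T.grade T.internal ?_ ?_ ?_ s
        · rw [zero_smul, zero_smul, map_zero]
        · intro k s hs
          refine gr_induction ℳ hint ?_ ?_ ?_ x
          · rw [smul_zero, map_zero, smul_zero]
          · intro n x hx
            rw [hga _ _ (hsmul hs hx), hga _ _ hx, map_smul, prP_hsmul T d Q hs]
          · intro x y hx hy
            rw [smul_add, map_add, map_add, smul_add, hx, hy]
        · intro a b ha hb
          rw [add_smul, map_add, ha, hb, add_smul] }
  have hg0 : ∀ n, ∀ x ∈ ℳ n, g0 x = prP T d Q n (g x) := hga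
  have hfg : ∀ x : M, (1 : R) ⊗ₜ[B] (fP Q φ (g0 x)) = 1 ⊗ₜ x := by
    intro x
    refine gr_induction ℳ hint ?_ ?_ ?_ x
    · rw [map_zero, map_zero]
    · intro n x hx
      rw [hg0 _ _ hx, fP_prP T d Q φ ℳ hsmul hint hφ, ← barP_one T ℳ hsmul hint]
      have : (1 : R) ⊗ₜ[B] (fP Q φ (g x)) = 1 ⊗ₜ x := by
        rw [← hγ1 x, ← hg' x, LinearMap.baseChange_tmul]
      rw [this, barP_one, gproj_same ℳ hint hx]
    · intro x y hx hy
      rw [map_add, map_add, TensorProduct.tmul_add, TensorProduct.tmul_add, hx, hy]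
  have hgf : ∀ w : B ⊗[A] (∀ i, Q i), (1 : R) ⊗ₜ[B] (g0 (fP Q φ w)) = 1 ⊗ₜ w := by
    intro w
    rw [← hγ2, hfg, hγ2]
  have b1 : Function.Bijective (fP Q φ ∘ₗ g0) := by
    refine nak T m e hspan (gproj ℳ hint) ?_ _ ?_ ?_
    · intro n s j
      exact gproj_smulh T ℳ hsmul hint (hm j) n s
    · intro j
      apply gproj_same
      refine sub_mem ?_ (hm j)
      rw [LinearMap.comp_apply, hg0 _ _ (hm j), fP_prP T d Q φ ℳ hsmul hint hφ]
      exact gproj_mem _ _ _ _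
    · intro j
      rw [TensorProduct.tmul_sub, LinearMap.comp_apply, hfg, sub_self]
  have b2 : Function.Bijective (g0 ∘ₗ fP Q φ) := by
    choose r q hq using fun i => Module.Finite.exists_fin (R := A) (M := Q i)
    let mP : (Σ i, Fin (r i)) → B ⊗[A] (∀ i, Q i) := fun j => 1 ⊗ₜ Pi.single j.1 (q j.1 j.2)
    have hfm : ∀ j, fP Q φ (mP j) ∈ ℳ (d j.1) := by
      intro j
      simp only [mP]
      rw [fP_tmul, fL_single, one_smul]
      exact hφ _ _
    refine nak T mP (fun j => d j.1) ?_ (fun n => (prP T d Q n).toAddMonoidHom) ?_ _ ?_ ?_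
    · rw [eq_top_iff]
      rintro w -
      induction w using TensorProduct.induction_on with
      | zero => exact zero_mem _
      | add x y hx hy => exact add_mem hx hy
      | tmul s y =>
        rw [← mul_one s, ← smul_eq_mul, ← TensorProduct.smul_tmul']
        refine Submodule.smul_mem _ _ ?_
        rw [← Finset.univ_sum_single y, TensorProduct.tmul_sum]
        refine sum_mem fun i _ => ?_
        let l : Q i →ₗ[A] B ⊗[A] (∀ i, Q i) :=
          TensorProduct.mk A B (∀ i, Q i) 1 ∘ₗ LinearMap.single A Q i
        have hle : Submodule.span A (Set.range (q i)) ≤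
            ((Submodule.span B (Set.range mP)).restrictScalars A).comap l := by
          rw [Submodule.span_le]
          rintro _ ⟨c, rfl⟩
          exact Submodule.subset_span ⟨⟨i, c⟩, rfl⟩
        rw [hq i] at hle
        exact hle (Submodule.mem_top (x := y i))
    · intro n s j
      change prP T d Q n (s • (1 ⊗ₜ Pi.single j.1 (q j.1 j.2))) =
        _ • (1 ⊗ₜ[A] Pi.single j.1 (q j.1 j.2))
      rw [TensorProduct.smul_tmul', TensorProduct.smul_tmul', prP_single, smul_eq_mul, smul_eq_mul,
        mul_one, mul_one]
    · intro j
      change prP T d Q (d j.1) (_ - _) = _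
      rw [map_sub, LinearMap.comp_apply, hg0 _ _ (hfm j), prP_idem]
      congr 1
      simp only [mP]
      rw [prP_single, sub_self]
      congr 1
      exact gproj_same _ T.internal T.one_mem
    · intro j
      rw [TensorProduct.tmul_sub, LinearMap.comp_apply, hgf, sub_self]
  constructor
  · intro x y hxy
    apply b2.1
    simp [hxy]
  · intro x
    obtain ⟨y, hy⟩ := b1.2 x
    exact ⟨g0 y, hy⟩
end core

/-- Lifting data for a module over `R`. -/
structure LW (A R : Type) [CommRing A] [CommRing R] [Algebra A R]
    (P : Type) [AddCommGroup P] [Module R P] where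
  Q : Type
  [instAddCommGroup : AddCommGroup Q]
  [instModule : Module A Q]
  finite : Module.Finite A Q
  projective : Module.Projective A Q
  equiv : (R ⊗[A] Q) ≃ₗ[R] P

attribute [instance] LW.instAddCommGroup LW.instModule

theorem exists_gens {M : Type} [AddCommGroup M] [Module B M] (ℳ : ℤ → AddSubgroup M)
    (hint : DirectSum.IsInternal ℳ) [Module.Finite B M] :
    ∃ (s : Finset M) (e : s → ℤ), (∀ j : s, (j : M) ∈ ℳ (e j)) ∧
      Submodule.span B (Set.range (fun j : s => (j : M))) = ⊤ := by
  have h1 : Submodule.span B {x : M | ∃ n, x ∈ ℳ n} = ⊤ := by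
    rw [eq_top_iff]
    rintro x -
    refine gr_induction ℳ hint (zero_mem _) ?_ (fun x y hx hy => add_mem hx hy) x
    intro n x hx
    exact Submodule.subset_span ⟨n, hx⟩
  have h2 : (Submodule.span B {x : M | ∃ n, x ∈ ℳ n}).FG := by
    rw [h1]; exact Module.Finite.fg_top
  rw [Submodule.fg_span_iff_fg_span_finset_subset] at h2
  obtain ⟨s, hs, hs2⟩ := h2
  choose e he using fun j : s => hs j.2
  refine ⟨s, e, he, ?_⟩
  rw [Subtype.range_coe_subtype]
  exact hs2.symm.trans h1

theorem main_abs {M : Type} [AddCommGroup M] [Module B M] [Module A M] [IsScalarTower A B M]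
    (ℳ : ℤ → AddSubgroup M)
    (hsmul : ∀ {m n : ℤ} {a : B} {x : M}, a ∈ T.grade m → x ∈ ℳ n → a • x ∈ ℳ (m + n))
    (hint : DirectSum.IsInternal ℳ) [Module.Finite B M] [Module.Projective B M]
    (hlift : ∀ (P : Type) [AddCommGroup P] [Module R P],
      Module.Finite R P → Module.Projective R P → Nonempty (LW A R P)) :
    ∃ (D : Finset ℤ) (Q : D → Type) (_ : ∀ i, AddCommGroup (Q i)) (_ : ∀ i, Module A (Q i))
      (_ : ∀ i, Module.Finite A (Q i)) (_ : ∀ i, Module.Projective A (Q i))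
      (φ : ∀ i, Q i →ₗ[A] M), (∀ (i : D) q, φ i q ∈ ℳ i) ∧ Function.Bijective (fP (B := B) Q φ) := by
  classical
  obtain ⟨s, e, he, hspan⟩ := exists_gens (B := B) ℳ hint
  let D : Finset ℤ := Finset.univ.image e
  let bp := fun i : ℤ => barP T ℳ hsmul hint i
  have bp1 : ∀ i m, bp i (1 ⊗ₜ m) = 1 ⊗ₜ gproj ℳ hint i m := fun i m => barP_one T ℳ hsmul hint i m
  have bpi : ∀ i z, bp i (bp i z) = bp i z := by
    intro i z
    obtain ⟨m, rfl⟩ := T.mk_surj M z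
    rw [bp1, bp1, gproj_same ℳ hint (gproj_mem ℳ hint i m)]
  have hfinN : ∀ i, Module.Finite R (LinearMap.range (bp i)) := fun i => inferInstance
  have hprojN : ∀ i, Module.Projective R (LinearMap.range (bp i)) := by
    intro i
    refine Module.Projective.of_split (LinearMap.range (bp i)).subtype (bp i).rangeRestrict ?_
    ext ⟨_, z, rfl⟩
    exact bpi i z
  let W : ∀ i : D, LW A R (LinearMap.range (bp i)) := fun i =>
    (hlift _ (hfinN i) (hprojN i)).some
  let Q : D → Type := fun i => (W i).Q
  have hQ1 : ∀ i, Module.Finite A (Q i) := fun i => (W i).finite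
  have hQ2 : ∀ i, Module.Projective A (Q i) := fun i => (W i).projective
  let E : ∀ i : D, (R ⊗[A] (Q i)) ≃ₗ[R] LinearMap.range (bp i) := fun i => (W i).equiv
  have hφ : ∀ i : D, ∃ φ : Q i →ₗ[A] M, ∀ q, φ q ∈ ℳ i ∧
      (1 : R) ⊗ₜ[B] φ q = (E i (1 ⊗ₜ q) : R ⊗[B] M) := by
    intro i
    let MA : Submodule A M :=
      { ℳ i with
        smul_mem' := by
          intro a x hx
          have := hsmul (T.algebraMap_mem a) hx
          rw [zero_add, algebraMap_smul] at this
          exact this }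
    let u : MA →ₗ[A] LinearMap.range (bp i) :=
      ((bp i).rangeRestrict.restrictScalars A) ∘ₗ
        ((TensorProduct.mk B R M 1).restrictScalars A) ∘ₗ MA.subtype
    let v : Q i →ₗ[A] LinearMap.range (bp i) :=
      ((E i).toLinearMap.restrictScalars A) ∘ₗ (TensorProduct.mk A R (Q i) 1)
    have hu : Function.Surjective u := by
      rintro ⟨_, z, rfl⟩
      obtain ⟨m, rfl⟩ := T.mk_surj M z
      refine ⟨⟨gproj ℳ hint i m, gproj_mem _ _ _ _⟩, ?_⟩
      apply Subtype.ext
      change bp i (1 ⊗ₜ gproj ℳ hint i m) = _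
      rw [← bp1, bpi]
    obtain ⟨w, hw⟩ := Module.projective_lifting_property u v hu
    refine ⟨MA.subtype ∘ₗ w, fun q => ⟨(w q).2, ?_⟩⟩
    have h1 := congrArg Subtype.val (LinearMap.congr_fun hw q)
    change bp i (1 ⊗ₜ (w q : M)) = (E i (1 ⊗ₜ q) : R ⊗[B] M) at h1
    rw [bp1, gproj_same ℳ hint (w q).2] at h1
    exact h1
  choose φ hφ using hφ
  refine ⟨D, Q, inferInstance, inferInstance, hQ1, hQ2, φ, fun i q => (hφ i q).1, ?_⟩
  let a : ∀ i : D, R ⊗[A] (Q i) →ₗ[R] R ⊗[B] (B ⊗[A] (∀ i, Q i)) := fun i =>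
    LinearMap.liftBaseChange R
      (((TensorProduct.mk B R (B ⊗[A] (∀ i, Q i)) 1).restrictScalars A) ∘ₗ
        TensorProduct.mk A B (∀ i, Q i) 1 ∘ₗ LinearMap.single A Q i)
  have ha : ∀ i q, a i (1 ⊗ₜ q) = 1 ⊗ₜ (1 ⊗ₜ Pi.single i q) := by
    intro i q
    simp only [a]
    rw [LinearMap.liftBaseChange_one_tmul]
    rfl
  let γ : R ⊗[B] M →ₗ[R] R ⊗[B] (B ⊗[A] (∀ i, Q i)) :=
    ∑ i : D, a i ∘ₗ (E i).symm.toLinearMap ∘ₗ (bp i).rangeRestrict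
  have hγ : ∀ z, γ z = ∑ i : D, a i ((E i).symm ((bp i).rangeRestrict z)) := by
    intro z
    simp [γ]
  have hfa : ∀ i z, (fP Q φ).baseChange R (a i z) = (E i z : R ⊗[B] M) := by
    intro i z
    obtain ⟨q, rfl⟩ := TensorProduct.mk_surjective A (Q i) R T.surj z
    rw [TensorProduct.mk_apply, ha, LinearMap.baseChange_tmul, fP_tmul, one_smul, fL_single,
      (hφ i q).2]
  have hsum : ∀ z : R ⊗[B] M, ∑ i : D, bp i z = z := by
    have h0 : ∀ x : M, ∑ i : D, bp i (1 ⊗ₜ x) = 1 ⊗ₜ x := by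
      intro x
      have hx : x ∈ Submodule.span B (Set.range (fun j : s => (j : M))) := by
        rw [hspan]; trivial
      let l : M →ₗ[B] R ⊗[B] M :=
        (∑ i : D, bp i).restrictScalars B ∘ₗ TensorProduct.mk B R M 1
      have hl : l = TensorProduct.mk B R M 1 := by
        refine LinearMap.ext_on hspan ?_
        rintro _ ⟨j, rfl⟩
        have hj : e j ∈ D := Finset.mem_image_of_mem _ (Finset.mem_univ j)
        change (∑ i : D, bp i) (1 ⊗ₜ (j : M)) = 1 ⊗ₜ (j : M)
        rw [LinearMap.sum_apply, Finset.sum_eq_single ⟨e j, hj⟩]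
        · rw [bp1, gproj_same ℳ hint (he j)]
        · intro i _ hi
          rw [bp1, gproj_ne ℳ hint (fun h => hi (Subtype.ext h.symm)) (he j),
            TensorProduct.tmul_zero]
        · simp
      have := LinearMap.congr_fun hl x
      simpa [l] using this
    intro z
    obtain ⟨m, rfl⟩ := T.mk_surj M z
    exact h0 m
  refine core T (fun i : D => (i : ℤ)) Q φ ℳ hsmul hint (fun i q => (hφ i q).1)
    (fun j : s => (j : M)) e he hspan γ ?_ ?_
  · intro x
    rw [hγ, map_sum]
    simp_rw [hfa, LinearEquiv.apply_symm_apply]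
    exact hsum _
  · have key : ∀ (i : D) (q : Q i), γ (1 ⊗ₜ φ i q) = 1 ⊗ₜ (1 ⊗ₜ Pi.single i q) := by
      intro i q
      rw [hγ, Finset.sum_eq_single i]
      · rw [← ha]
        congr 1
        rw [LinearEquiv.symm_apply_eq]
        apply Subtype.ext
        change bp i (1 ⊗ₜ φ i q) = _
        rw [bp1, gproj_same ℳ hint (hφ i q).1, (hφ i q).2]
      · intro j _ hj
        have : (bp j).rangeRestrict (1 ⊗ₜ φ i q) = 0 := by
          apply Subtype.ext
          change bp j (1 ⊗ₜ φ i q) = _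
          rw [bp1, gproj_ne ℳ hint (fun h => hj (Subtype.ext h.symm)) (hφ i q).1,
            TensorProduct.tmul_zero]
          rfl
        rw [this, map_zero, map_zero]
      · simp
    intro w
    let l1 : B ⊗[A] (∀ i, Q i) →ₗ[B] R ⊗[B] (B ⊗[A] (∀ i, Q i)) :=
      γ.restrictScalars B ∘ₗ TensorProduct.mk B R M 1 ∘ₗ fP Q φ
    have hl : l1 = TensorProduct.mk B R (B ⊗[A] (∀ i, Q i)) 1 := by
      apply LinearMap.ext
      intro w
      induction w using TensorProduct.induction_on with
      | zero => rw [map_zero, map_zero]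
      | add x y hx hy => rw [map_add, map_add, hx, hy]
      | tmul s y =>
        rw [← mul_one s, ← smul_eq_mul, ← TensorProduct.smul_tmul', map_smul, map_smul]
        congr 1
        rw [← Finset.univ_sum_single y, TensorProduct.tmul_sum, map_sum, map_sum]
        refine Finset.sum_congr rfl fun i _ => ?_
        change γ (1 ⊗ₜ fP Q φ (1 ⊗ₜ[A] Pi.single i (y i))) = 1 ⊗ₜ (1 ⊗ₜ[A] Pi.single i (y i))
        rw [fP_tmul, one_smul, fL_single, key]
    exact LinearMap.congr_fun hl w

section piGrading
variable {D : Finset ℤ} (Q : D → Type) [∀ i, AddCommGroup (Q i)] [∀ i, Module A (Q i)]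

/-- The grading on the product of the `Q i`. -/
def piGr (n : ℤ) : Submodule A (∀ i, Q i) where
  carrier := {y | ∀ i : D, (i : ℤ) ≠ n → y i = 0}
  add_mem' hx hy i hi := by simp [hx i hi, hy i hi]
  zero_mem' i _ := rfl
  smul_mem' a x hx i hi := by simp [hx i hi]

lemma single_mem_piGr (i : D) (q : Q i) : Pi.single i q ∈ piGr (A := A) Q i := by
  intro j hj
  exact Pi.single_eq_of_ne (fun h => hj (congrArg _ h)) _

lemma piGr_internal : DirectSum.IsInternal (piGr (A := A) Q) := by
  classical
  have claim : ∀ (x : DirectSum ℤ fun n => piGr (A := A) Q n) (i : D),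
      (DirectSum.coeAddMonoidHom (piGr (A := A) Q) x) i = (x (i : ℤ) : ∀ i, Q i) i := by
    intro x i
    induction x using DirectSum.induction_on with
    | zero => simp
    | of n y =>
      rw [DirectSum.coeAddMonoidHom_of]
      by_cases h : (i : ℤ) = n
      · subst h
        rw [DirectSum.of_eq_same]
      · rw [DirectSum.of_eq_of_ne _ _ _ h]
        exact y.2 i h
    | add x y hx hy =>
      rw [map_add, Pi.add_apply, hx, hy]
      rfl
  constructor
  · intro x y hxy
    refine DFinsupp.ext fun n => Subtype.ext (funext fun i => ?_)
    by_cases h : (i : ℤ) = n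
    · subst h
      have h1 := claim x i
      have h2 := claim y i
      exact h1.symm.trans ((congrFun hxy i).trans h2)
    · exact ((x n).2 i h).trans ((y n).2 i h).symm
  · intro y
    refine ⟨∑ i : D, DirectSum.of (fun n => piGr (A := A) Q n) i
      ⟨Pi.single i (y i), single_mem_piGr Q i _⟩, ?_⟩
    rw [map_sum]
    simp_rw [DirectSum.coeAddMonoidHom_of]
    exact Finset.univ_sum_single y

lemma piGr_support : {n : ℤ | piGr (A := A) Q n ≠ ⊥}.Finite := by
  refine D.finite_toSet.subset fun n hn => ?_
  by_contra h
  refine hn ((Submodule.eq_bot_iff _).2 fun x hx => funext fun i => hx i ?_)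
  rintro rfl
  exact h i.2
end piGrading

section frame
variable {p : ℕ} {S : Type} [CommRing S] (F : Frame p S)

lemma t_pow_mem (n : ℕ) : F.t ^ n ∈ F.grade (-(n : ℤ)) := by
  induction n with
  | zero => simpa using F.one_mem
  | succ n ih =>
    have := F.mul_mem ih F.t_mem
    rw [← pow_succ] at this
    convert this using 2
    push_cast; ring

lemma neg_eq {n : ℕ} (hn : 1 ≤ n) {x : S} (hx : x ∈ F.grade (-(n : ℤ))) :
    x = F.τ x * F.t ^ n := by
  refine (F.τ_bij n hn).injOn hx ?_ ?_
  · simpa using F.mul_mem (F.τ_mem x) (t_pow_mem F n)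
  · rw [map_mul, map_pow, F.τ_t, one_pow, mul_one, F.τ_id _ (F.τ_mem x)]

lemma pos_mul_neg {n : ℕ} (hn : 1 ≤ n) {x y : S} (hx : x ∈ F.grade n)
    (hy : y ∈ F.grade (-(n : ℤ))) : ∃ z ∈ F.grade 1, x * y = F.t * z := by
  obtain ⟨k, rfl⟩ : ∃ k, n = k + 1 := ⟨n - 1, by omega⟩
  refine ⟨F.τ y * (x * F.t ^ k), ?_, ?_⟩
  · have := F.mul_mem (F.τ_mem y) (F.mul_mem hx (t_pow_mem F k))
    convert this using 2
    push_cast; ring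
  · conv_lhs => rw [neg_eq F hn hy]
    ring

lemma mul_opp {n : ℤ} (hn : n ≠ 0) {x y : S} (hx : x ∈ F.grade n)
    (hy : y ∈ F.grade (-n)) : ∃ z ∈ F.grade 1, x * y = F.t * z := by
  rcases lt_or_gt_of_ne hn with h | h
  · obtain ⟨k, rfl⟩ : ∃ k : ℕ, n = -(k : ℤ) := ⟨n.natAbs, by omega⟩
    rw [neg_neg] at hy
    rw [mul_comm]
    exact pos_mul_neg F (by omega) hy hx
  · obtain ⟨k, rfl⟩ : ∃ k : ℕ, n = (k : ℤ) := ⟨n.natAbs, by omega⟩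
    exact pos_mul_neg F (by omega) hx hy

/-- Projection to degree zero. -/
noncomputable def p0 : S →+ F.S0 where
  toFun s := ⟨gproj F.grade F.isInternal 0 s, gproj_mem _ _ _ _⟩
  map_zero' := Subtype.ext (map_zero _)
  map_add' x y := Subtype.ext (map_add _ _ _)

lemma p0_same {s : S} (hs : s ∈ F.grade 0) : p0 F s = ⟨s, hs⟩ :=
  Subtype.ext (gproj_same _ F.isInternal hs)

lemma p0_ne {n : ℤ} (hn : n ≠ 0) {s : S} (hs : s ∈ F.grade n) : p0 F s = 0 :=
  Subtype.ext (gproj_ne _ F.isInternal hn hs)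

/-- The ring homomorphism `S → R`. -/
noncomputable def rho : S →+* F.R where
  toFun s := Ideal.Quotient.mk F.tS1 (p0 F s)
  map_zero' := by rw [map_zero, map_zero]
  map_add' x y := by rw [map_add, map_add]
  map_one' := by rw [p0_same F F.one_mem]; rfl
  map_mul' x y := by
    refine gr_induction F.grade F.isInternal ?_ ?_ ?_ x
    · rw [zero_mul, map_zero, map_zero, zero_mul]
    · intro m x hx
      refine gr_induction F.grade F.isInternal ?_ ?_ ?_ y
      · rw [mul_zero, map_zero, map_zero, mul_zero]
      · intro n y hy
        by_cases hm : m = 0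
        · subst hm
          by_cases hn : n = 0
          · subst hn
            rw [p0_same F hx, p0_same F hy, ← map_mul,
              p0_same F (by simpa using F.mul_mem hx hy)]
            rfl
          · rw [p0_ne F hn hy, p0_ne F (by omega) (F.mul_mem hx hy), map_zero, mul_zero]
        · rw [p0_ne F hm hx, map_zero, zero_mul]
          by_cases hmn : m + n = 0
          · obtain rfl : n = -m := by omega
            obtain ⟨z, hz, hxy⟩ := mul_opp F hm hx hy
            rw [Ideal.Quotient.eq_zero_iff_mem, p0_same F (by simpa using F.mul_mem hx hy)]
            exact ⟨z, hz, hxy⟩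
          · rw [p0_ne F hmn (F.mul_mem hx hy), map_zero]
      · intro a b ha hb
        rw [mul_add, map_add, map_add, map_add, map_add, mul_add, ha, hb]
    · intro a b ha hb
      rw [add_mul, map_add, map_add, map_add, map_add, add_mul, ha, hb]

lemma unit_of (s : S) (hs : s ∈ F.grade 0) (h1 : rho F s = 1) : IsUnit s := by
  have h2 : Ideal.Quotient.mk F.tS1 ⟨s, hs⟩ = Ideal.Quotient.mk F.tS1 1 := by
    rw [← p0_same F hs]; exact h1
  rw [Ideal.Quotient.eq] at h2
  obtain ⟨x, hx, hsx⟩ := h2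
  have hsx' : s - 1 = F.t * x := hsx
  have hb0 : 1 - s ∈ F.grade 0 := sub_mem F.one_mem hs
  obtain ⟨c, hc, hcs⟩ := F.σ_frob (1 - s) hb0
  have hb : 1 - s = F.t * (-x) := by linear_combination -hsx'
  have hpow : (1 - s) ^ p = (p : S) * (F.σ (-x) - c) := by
    have : F.σ (1 - s) = (p : S) * F.σ (-x) := by rw [hb, map_mul, F.σ_t]
    rw [this] at hcs
    linear_combination -hcs
  obtain ⟨y, hy, hyu⟩ := F.p_jac (F.σ (-x) - c) (sub_mem (F.σ_mem _) hc)
  rw [← hpow] at hyu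
  have hdvd : s ∣ 1 - (1 - s) ^ p := by
    have := sub_dvd_pow_sub_pow 1 (1 - s) p
    rwa [one_pow, sub_sub_cancel] at this
  exact isUnit_of_dvd_one (hdvd.trans ⟨y, hyu.symm⟩)

end frame

end FrameAux

/-- Let `(S, σ, τ)` be a frame for `R` such that every finitely generated
projective `R`-module lifts to `S₀` (is isomorphic to `Q ⊗_{S₀} R` for some finitely
generated projective `S₀`-module `Q`).  Then every graded `S`-module `M` which is finitely
generated and projective as an `S`-module is standard projective. -/
theorem frame_finite_projective_graded_is_standard (p : ℕ) (hp : p.Prime)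
    {S : Type} [CommRing S] (F : Frame p S)
    (hlift : ∀ (P : Type) [AddCommGroup P] [Module F.R P],
      Module.Finite F.R P → Module.Projective F.R P → Nonempty (F.LiftWitness P))
    {M : Type} [AddCommGroup M] [Module S M]
    (ℳ : ℤ → AddSubgroup M)
    (hsmul : ∀ {m n : ℤ} {a : S} {x : M}, a ∈ F.grade m → x ∈ ℳ n → a • x ∈ ℳ (m + n))
    (hinternal : DirectSum.IsInternal ℳ)
    (hfin : Module.Finite S M)
    (hproj : Module.Projective S M) :
    Nonempty (F.StandardProjectiveWitness M ℳ) := by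
  classical
  letI : Algebra S F.R := (FrameAux.rho F).toAlgebra
  haveI : IsScalarTower F.S0 S F.R := IsScalarTower.of_algebraMap_eq fun a => by
    change Ideal.Quotient.mk F.tS1 a = Ideal.Quotient.mk F.tS1 (FrameAux.p0 F a)
    rw [FrameAux.p0_same F a.2]
  let T : FrameAux.Setup F.S0 S F.R :=
    { grade := F.grade
      mul_mem := F.mul_mem
      internal := F.isInternal
      algebraMap_mem := fun a => a.2
      kill := by
        intro n s hn hs
        change Ideal.Quotient.mk F.tS1 (FrameAux.p0 F s) = 0
        rw [FrameAux.p0_ne F hn hs, map_zero]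
      surj := Ideal.Quotient.mk_surjective
      unit := FrameAux.unit_of F }
  obtain ⟨D, Q, i1, i2, i3, i4, φ, hφ, hbij⟩ := FrameAux.main_abs T ℳ hsmul hinternal (by
    intro P _ _ h1 h2
    obtain ⟨w⟩ := hlift P h1 h2
    exact ⟨{ Q := w.Q, finite := w.finite, projective := w.projective, equiv := w.equiv }⟩)
  have hmem : ∀ (i : ℤ), ∀ y ∈ FrameAux.piGr (A := F.S0) Q i, FrameAux.fL Q φ y ∈ ℳ i := by
    intro i y hy
    rw [FrameAux.fL_apply]
    refine sum_mem fun j _ => ?_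
    by_cases h : (j : ℤ) = i
    · subst h; exact hφ _ _
    · rw [hy j h, map_zero]; exact zero_mem _
  refine ⟨{
    L := ∀ i, Q i
    Λ := FrameAux.piGr Q
    internal := FrameAux.piGr_internal Q
    finiteSupport := FrameAux.piGr_support Q
    finite := inferInstance
    projective := Module.Projective.of_equiv' (DFinsupp.linearEquivFunOnFintype (R := F.S0) (M := Q))
    equiv := LinearEquiv.ofBijective (FrameAux.fP (B := S) Q φ) hbij
    graded := ?_ }⟩
  intro n x
  obtain ⟨w, rfl⟩ := hbij.2 x
  have hw : (LinearEquiv.ofBijective (FrameAux.fP (B := S) Q φ) hbij).symm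
      (FrameAux.fP (B := S) Q φ w) = w :=
    LinearEquiv.ofBijective_symm_apply_apply _ w
  rw [hw]
  constructor
  · intro hx
    have h1 : FrameAux.prP T (fun i : D => (i : ℤ)) Q n w = w := by
      apply hbij.1
      rw [FrameAux.fP_prP T (fun i : D => (i : ℤ)) Q φ ℳ hsmul hinternal hφ]
      exact FrameAux.gproj_same ℳ hinternal hx
    rw [← h1]
    clear h1 hx hw
    induction w using TensorProduct.induction_on with
    | zero => rw [map_zero]; exact zero_mem _
    | add x y hx hy => rw [map_add]; exact add_mem hx hy
    | tmul s y =>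
      rw [FrameAux.prP_tmul]
      refine sum_mem fun i _ => AddSubgroup.subset_closure ?_
      exact ⟨i, _, _, T.pr_mem _ _, FrameAux.single_mem_piGr Q i _, rfl⟩
  · intro hx
    have hle : AddSubgroup.closure
        {w : TensorProduct F.S0 S (∀ i, Q i) |
          ∃ (i : ℤ) (s : S) (y : ∀ i, Q i), s ∈ F.grade (n - i) ∧
            y ∈ FrameAux.piGr (A := F.S0) Q i ∧ w = s ⊗ₜ[F.S0] y} ≤
        (ℳ n).comap (FrameAux.fP (B := S) Q φ).toAddMonoidHom := by
      rw [AddSubgroup.closure_le]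
      rintro _ ⟨i, s, y, hs, hy, rfl⟩
      change FrameAux.fP (B := S) Q φ (s ⊗ₜ[F.S0] y) ∈ ℳ n
      rw [FrameAux.fP_tmul]
      have := hsmul hs (hmem i y hy)
      rwa [sub_add_cancel] at this
    exact hle hx
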